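/- There exists η > 0 such that every φ ∈ C⁴(D₀) (2π-periodic in y) with ‖φ − φ⁰‖_{C⁴(D₀)} ≤ η, for which there exists a point m̃ = (m̃₁,m̃₂) with |m̃ − m̃₀| ≤ η, ∂_xφ(m̃,1) = 0, ∂_x(∂_xφ)(m̃,1) = 0 and ∂_y(∂_xφ)(m̃,1) = 0, satisfies condition (H) at (m̃,1). -/

import Mathlib

noncomputable section

/-- Partial derivative in coordinate `i` (0 = x, 1 = y, 2 = t) of a function on `ℝ × ℝ × ℝ`. -/
def pd (i : Fin 3) (f : ℝ × ℝ × ℝ → ℝ) (p : ℝ × ℝ × ℝ) : ℝ :=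
  if i = 0 then deriv (fun s => f (s, p.2.1, p.2.2)) p.1
  else if i = 1 then deriv (fun s => f (p.1, s, p.2.2)) p.2.1
  else deriv (fun s => f (p.1, p.2.1, s)) p.2.2

/-- The domain `D₀ = [−A₀, M] × ℝ × [0, 1]`. -/
def D0 (A₀ M : ℝ) : Set (ℝ × ℝ × ℝ) :=
  {p | p.1 ∈ Set.Icc (-A₀) M ∧ p.2.2 ∈ Set.Icc 0 1}

/-- `2π`-periodicity in the variable `y`. -/
def PerY (f : ℝ × ℝ × ℝ → ℝ) : Prop :=
  ∀ x y t : ℝ, f (x, y + 2 * Real.pi, t) = f (x, y, t)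

/-- Condition (H) for `φ` at the point `M̃ = (m₁, m₂, 1)`:  `∂_xφ ≥ 0` on `D₀`, vanishing
exactly at `(m₁, m₂ + 2kπ, 1)`; `∂_t∂_xφ(M̃) < 0`; `∇_{x,y}(∂_xφ)(M̃) = 0`; and the
Hessian of `∂_xφ` in `(x,y)` at `M̃` is positive definite. -/
def CondH (A₀ M : ℝ) (φ : ℝ × ℝ × ℝ → ℝ) (m₁ m₂ : ℝ) : Prop :=
  m₁ ∈ Set.Ioo (-A₀) M ∧
  (∀ p ∈ D0 A₀ M, 0 ≤ pd 0 φ p) ∧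
  (∀ p ∈ D0 A₀ M, (pd 0 φ p = 0 ↔ ∃ k : ℤ, p = (m₁, m₂ + 2 * Real.pi * k, 1))) ∧
  pd 2 (pd 0 φ) (m₁, m₂, 1) < 0 ∧
  pd 0 (pd 0 φ) (m₁, m₂, 1) = 0 ∧
  pd 1 (pd 0 φ) (m₁, m₂, 1) = 0 ∧
  (0 < pd 0 (pd 0 (pd 0 φ)) (m₁, m₂, 1) ∧
    0 < pd 0 (pd 0 (pd 0 φ)) (m₁, m₂, 1) * pd 1 (pd 1 (pd 0 φ)) (m₁, m₂, 1) -
        (pd 1 (pd 0 (pd 0 φ)) (m₁, m₂, 1)) ^ 2)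

/-- `‖φ − ψ‖_{C⁴(D₀)} ≤ η` : all derivatives of `φ − ψ` up to order 4 are `≤ η` on `D₀`. -/
def C4Close (A₀ M : ℝ) (φ ψ : ℝ × ℝ × ℝ → ℝ) (η : ℝ) : Prop :=
  ∀ i : ℕ, i ≤ 4 → ∀ p ∈ D0 A₀ M,
    ‖iteratedFDeriv ℝ i (fun q => φ q - ψ q) p‖ ≤ η

/-- Coordinate vectors. -/
def ev (i : Fin 3) : ℝ × ℝ × ℝ :=
  if i = 0 then (1, 0, 0) else if i = 1 then (0, 1, 0) else (0, 0, 1)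

lemma ev_norm (i : Fin 3) : ‖ev i‖ ≤ 1 := by
  fin_cases i <;> simp [ev, Prod.norm_def]

lemma pd_eq (i : Fin 3) (f : ℝ × ℝ × ℝ → ℝ) (hf : Differentiable ℝ f) (p : ℝ × ℝ × ℝ) :
    pd i f p = fderiv ℝ f p (ev i) := by
  obtain ⟨x, y, t⟩ := p
  have hF := (hf (x, y, t)).hasFDerivAt
  fin_cases i
  · have h1 : HasDerivAt (fun s : ℝ => ((s, y, t) : ℝ × ℝ × ℝ)) (1, 0, 0) x :=
      (hasDerivAt_id x).prodMk ((hasDerivAt_const x y).prodMk (hasDerivAt_const x t))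
    have h2 : HasDerivAt (fun s : ℝ => f (s, y, t)) (fderiv ℝ f (x, y, t) (1, 0, 0)) x :=
      HasFDerivAt.comp_hasDerivAt x hF h1
    simpa [pd, ev] using h2.deriv
  · have h1 : HasDerivAt (fun s : ℝ => ((x, s, t) : ℝ × ℝ × ℝ)) (0, 1, 0) y :=
      (hasDerivAt_const y x).prodMk ((hasDerivAt_id y).prodMk (hasDerivAt_const y t))
    have h2 : HasDerivAt (fun s : ℝ => f (x, s, t)) (fderiv ℝ f (x, y, t) (0, 1, 0)) y :=
      HasFDerivAt.comp_hasDerivAt y hF h1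
    simpa [pd, ev] using h2.deriv
  · have h1 : HasDerivAt (fun s : ℝ => ((x, y, s) : ℝ × ℝ × ℝ)) (0, 0, 1) t :=
      (hasDerivAt_const t x).prodMk ((hasDerivAt_const t y).prodMk (hasDerivAt_id t))
    have h2 : HasDerivAt (fun s : ℝ => f (x, y, s)) (fderiv ℝ f (x, y, t) (0, 0, 1)) t :=
      HasFDerivAt.comp_hasDerivAt t hF h1
    simpa [pd, ev] using h2.deriv

lemma pd_fun (i : Fin 3) (f : ℝ × ℝ × ℝ → ℝ) (hf : Differentiable ℝ f) :
    pd i f = fun p => fderiv ℝ f p (ev i) := funext (pd_eq i f hf)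

lemma pd_contDiff (i : Fin 3) (f : ℝ × ℝ × ℝ → ℝ) (n : ℕ) (hf : ContDiff ℝ (n + 1 : ℕ) f) :
    ContDiff ℝ n (pd i f) := by
  rw [pd_fun i f (hf.differentiable (by simp))]
  have : ContDiff ℝ n (fderiv ℝ f) := hf.fderiv_right (by norm_cast)
  exact this.clm_apply contDiff_const

lemma pd_iter (i : Fin 3) (f : ℝ × ℝ × ℝ → ℝ) (n : ℕ) (hf : ContDiff ℝ (n + 1 : ℕ) f)
    (v : Fin n → ℝ × ℝ × ℝ) :
    pd i (fun p => iteratedFDeriv ℝ n f p v) =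
      fun p => iteratedFDeriv ℝ (n + 1) f p (Fin.cons (ev i) v : Fin (n + 1) → ℝ × ℝ × ℝ) := by
  have hd : Differentiable ℝ (iteratedFDeriv ℝ n f) :=
    hf.differentiable_iteratedFDeriv (by norm_cast; omega)
  funext p
  have h1 : HasFDerivAt (fun p => iteratedFDeriv ℝ n f p v)
      ((ContinuousMultilinearMap.apply ℝ (fun _ : Fin n => ℝ × ℝ × ℝ) ℝ v).comp
        (fderiv ℝ (iteratedFDeriv ℝ n f) p)) p :=
    (ContinuousMultilinearMap.apply ℝ (fun _ : Fin n => ℝ × ℝ × ℝ) ℝ v).hasFDerivAt.comp p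
      (hd p).hasFDerivAt
  have hd2 : Differentiable ℝ (fun p => iteratedFDeriv ℝ n f p v) := fun q =>
    ((ContinuousMultilinearMap.apply ℝ (fun _ : Fin n => ℝ × ℝ × ℝ) ℝ v).hasFDerivAt.comp q
      (hd q).hasFDerivAt).differentiableAt
  rw [pd_eq i _ hd2, h1.fderiv, iteratedFDeriv_succ_apply_left]
  simp

lemma pd1_iter (i : Fin 3) (f : ℝ × ℝ × ℝ → ℝ) (hf : ContDiff ℝ (1 : ℕ) f) :
    pd i f = fun p => iteratedFDeriv ℝ 1 f p
      (Fin.cons (ev i) ![] : Fin 1 → ℝ × ℝ × ℝ) := by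
  rw [← pd_iter i f 0 hf ![]]
  simp

lemma pd2_iter (j i : Fin 3) (f : ℝ × ℝ × ℝ → ℝ) (hf : ContDiff ℝ (2 : ℕ) f) :
    pd j (pd i f) = fun p => iteratedFDeriv ℝ 2 f p
      (Fin.cons (ev j) (Fin.cons (ev i) ![] : Fin 1 → ℝ × ℝ × ℝ) : Fin 2 → ℝ × ℝ × ℝ) := by
  rw [← pd_iter j f 1 hf, pd1_iter i f (hf.of_le (by norm_cast))]

lemma pd3_iter (k j i : Fin 3) (f : ℝ × ℝ × ℝ → ℝ) (hf : ContDiff ℝ (3 : ℕ) f) :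
    pd k (pd j (pd i f)) = fun p => iteratedFDeriv ℝ 3 f p
      (Fin.cons (ev k) (Fin.cons (ev j) (Fin.cons (ev i) ![] : Fin 1 → ℝ × ℝ × ℝ) :
        Fin 2 → ℝ × ℝ × ℝ) : Fin 3 → ℝ × ℝ × ℝ) := by
  rw [← pd_iter k f 2 hf, pd2_iter j i f (hf.of_le (by norm_cast))]

lemma close_aux (A₀ M η : ℝ) (n : ℕ) (hn : n ≤ 4) (φ ψ : ℝ × ℝ × ℝ → ℝ)
    (hφ : ContDiff ℝ 4 φ) (hψ : ContDiff ℝ 4 ψ) (h : C4Close A₀ M φ ψ η)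
    (v : Fin n → ℝ × ℝ × ℝ) (hv : ∀ i, ‖v i‖ ≤ 1) (p : ℝ × ℝ × ℝ) (hp : p ∈ D0 A₀ M) :
    |iteratedFDeriv ℝ n φ p v - iteratedFDeriv ℝ n ψ p v| ≤ η := by
  have h1 := h n hn p hp
  have h2 : iteratedFDeriv ℝ n (fun q => φ q - ψ q) p
      = iteratedFDeriv ℝ n φ p - iteratedFDeriv ℝ n ψ p :=
    iteratedFDeriv_sub_apply (hφ.of_le (by exact_mod_cast hn)).contDiffAt
      (hψ.of_le (by exact_mod_cast hn)).contDiffAt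
  have h3 := (iteratedFDeriv ℝ n (fun q => φ q - ψ q) p).le_opNorm v
  have h4 : ∏ i, ‖v i‖ ≤ 1 := Finset.prod_le_one (fun i _ => norm_nonneg _) (fun i _ => hv i)
  have h5 : ‖iteratedFDeriv ℝ n (fun q => φ q - ψ q) p‖ * ∏ i, ‖v i‖ ≤ η :=
    (mul_le_of_le_one_right (norm_nonneg _) h4).trans h1
  have h6 := h3.trans h5
  rw [h2] at h6
  simpa using h6

lemma close1 (A₀ M η : ℝ) (φ ψ : ℝ × ℝ × ℝ → ℝ)
    (hφ : ContDiff ℝ 4 φ) (hψ : ContDiff ℝ 4 ψ) (h : C4Close A₀ M φ ψ η) (i : Fin 3)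
    (p : ℝ × ℝ × ℝ) (hp : p ∈ D0 A₀ M) : |pd i φ p - pd i ψ p| ≤ η := by
  rw [pd1_iter i φ (hφ.of_le (by norm_cast)), pd1_iter i ψ (hψ.of_le (by norm_cast))]
  refine close_aux A₀ M η 1 (by norm_num) φ ψ hφ hψ h _ ?_ p hp
  simp [Fin.forall_fin_succ, ev_norm]

lemma close2 (A₀ M η : ℝ) (φ ψ : ℝ × ℝ × ℝ → ℝ)
    (hφ : ContDiff ℝ 4 φ) (hψ : ContDiff ℝ 4 ψ) (h : C4Close A₀ M φ ψ η) (j i : Fin 3)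
    (p : ℝ × ℝ × ℝ) (hp : p ∈ D0 A₀ M) : |pd j (pd i φ) p - pd j (pd i ψ) p| ≤ η := by
  rw [pd2_iter j i φ (hφ.of_le (by norm_cast)), pd2_iter j i ψ (hψ.of_le (by norm_cast))]
  refine close_aux A₀ M η 2 (by norm_num) φ ψ hφ hψ h _ ?_ p hp
  simp [Fin.forall_fin_succ, ev_norm]

lemma close3 (A₀ M η : ℝ) (φ ψ : ℝ × ℝ × ℝ → ℝ)
    (hφ : ContDiff ℝ 4 φ) (hψ : ContDiff ℝ 4 ψ) (h : C4Close A₀ M φ ψ η) (k j i : Fin 3)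
    (p : ℝ × ℝ × ℝ) (hp : p ∈ D0 A₀ M) :
    |pd k (pd j (pd i φ)) p - pd k (pd j (pd i ψ)) p| ≤ η := by
  rw [pd3_iter k j i φ (hφ.of_le (by norm_cast)), pd3_iter k j i ψ (hψ.of_le (by norm_cast))]
  refine close_aux A₀ M η 3 (by norm_num) φ ψ hφ hψ h _ ?_ p hp
  simp [Fin.forall_fin_succ, ev_norm]

/-- Second derivative quadratic form in terms of partial derivatives. -/
lemma quad_eq (f : ℝ × ℝ × ℝ → ℝ) (hf : ContDiff ℝ 2 f) (p : ℝ × ℝ × ℝ) (a b : ℝ) :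
    fderiv ℝ (fderiv ℝ f) p (a, b, 0) (a, b, 0) =
      a ^ 2 * pd 0 (pd 0 f) p + 2 * a * b * pd 1 (pd 0 f) p + b ^ 2 * pd 1 (pd 1 f) p := by
  have hd : Differentiable ℝ f := hf.differentiable (by norm_num)
  have hd1 : ContDiff ℝ 1 (fderiv ℝ f) := hf.fderiv_right (by norm_num)
  have hdd : Differentiable ℝ (fderiv ℝ f) := hd1.differentiable (by norm_num)
  have key : ∀ j i : Fin 3, pd j (pd i f) p = fderiv ℝ (fderiv ℝ f) p (ev j) (ev i) := by
    intro j i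
    rw [pd_fun i f hd]
    have hda : Differentiable ℝ (fun p => fderiv ℝ f p (ev i)) :=
      hdd.clm_apply (differentiable_const _)
    rw [pd_eq j _ hda]
    have h1 : HasFDerivAt (fun p => fderiv ℝ f p (ev i))
      ((ContinuousLinearMap.apply ℝ ℝ (ev i)).comp
        (fderiv ℝ (fderiv ℝ f) p)) p :=
      (ContinuousLinearMap.apply ℝ ℝ (ev i)).hasFDerivAt.comp p (hdd p).hasFDerivAt
    rw [h1.fderiv]
    simp
  have hs : IsSymmSndFDerivAt ℝ f p := hf.contDiffAt.isSymmSndFDerivAt (by simp)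
  have hw : ((a, b, 0) : ℝ × ℝ × ℝ) = a • ev 0 + b • ev 1 := by simp [ev]
  rw [key, key, key, hw]
  have h01 := hs.eq (ev 0) (ev 1)
  simp only [map_add, map_smul, add_apply, smul_apply,
    smul_eq_mul]
  rw [h01]
  ring

lemma quad_pos (a b A B C : ℝ) (hA : 0 < A) (hD : 0 < A * C - B ^ 2) (h : ¬ (a = 0 ∧ b = 0)) :
    0 < a ^ 2 * A + 2 * a * b * B + b ^ 2 * C := by
  by_cases hb : b = 0
  · have ha : a ≠ 0 := fun h' => h ⟨h', hb⟩
    subst hb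
    have := mul_pos (pow_pos (abs_pos.2 ha) 2) hA
    rw [sq_abs] at this
    nlinarith
  · have h1 : 0 < b ^ 2 := by positivity
    have h2 : 0 < A * (a ^ 2 * A + 2 * a * b * B + b ^ 2 * C) := by
      nlinarith [sq_nonneg (a * A + b * B), mul_pos h1 hD]
    exact (pos_iff_pos_of_mul_pos h2).1 hA

lemma local_pos (f : ℝ × ℝ × ℝ → ℝ) (hf : ContDiff ℝ 2 f) (U : Set (ℝ × ℝ × ℝ))
    (hU : Convex ℝ U) (m₁ m₂ : ℝ) (hm : (m₁, m₂, 1) ∈ U)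
    (h0 : f (m₁, m₂, 1) = 0) (hx : pd 0 f (m₁, m₂, 1) = 0) (hy : pd 1 f (m₁, m₂, 1) = 0)
    (hA : ∀ p ∈ U, 0 < pd 0 (pd 0 f) p)
    (hD : ∀ p ∈ U, 0 < pd 0 (pd 0 f) p * pd 1 (pd 1 f) p - (pd 1 (pd 0 f) p) ^ 2)
    (ht : ∀ p ∈ U, pd 2 f p < 0)
    (x y t : ℝ) (hp : (x, y, t) ∈ U) (hp1 : (x, y, 1) ∈ U) (ht1 : t ≤ 1)
    (hne : (x, y, t) ≠ (m₁, m₂, 1)) : 0 < f (x, y, t) := by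
  have hd : Differentiable ℝ f := hf.differentiable (by norm_num)
  have hd1 : ContDiff ℝ 1 (fderiv ℝ f) := hf.fderiv_right (by norm_num)
  have hdd : Differentiable ℝ (fderiv ℝ f) := hd1.differentiable (by norm_num)
  have s1 : ¬ (x - m₁ = 0 ∧ y - m₂ = 0) → 0 < f (x, y, 1) := by
    intro hab
    set w : ℝ × ℝ × ℝ := (x - m₁, y - m₂, 0) with hw
    set c : ℝ × ℝ × ℝ := (m₁, m₂, 1) with hc
    have hmem : ∀ s ∈ Set.Icc (0:ℝ) 1, c + s • w ∈ U := by
      intro s hs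
      have := hU.add_smul_sub_mem hm hp1 hs
      have e : ((x, y, 1) : ℝ × ℝ × ℝ) - (m₁, m₂, 1) = w := by simp [hw]
      rwa [e] at this
    have hl : ∀ s : ℝ, HasDerivAt (fun s : ℝ => c + s • w) w s := by
      intro s
      simpa using ((hasDerivAt_id s).smul_const w).const_add c
    have hh1 : ∀ s : ℝ, HasDerivAt (fun s : ℝ => f (c + s • w)) (fderiv ℝ f (c + s • w) w) s :=
      fun s => HasFDerivAt.comp_hasDerivAt s (hd _).hasFDerivAt (hl s)
    have hh2 : ∀ s : ℝ, HasDerivAt (fun s : ℝ => fderiv ℝ f (c + s • w) w)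
        (fderiv ℝ (fderiv ℝ f) (c + s • w) w w) s := by
      intro s
      have h3 : HasDerivAt (fun s : ℝ => fderiv ℝ f (c + s • w))
        (fderiv ℝ (fderiv ℝ f) (c + s • w) w) s :=
        HasFDerivAt.comp_hasDerivAt s (hdd _).hasFDerivAt (hl s)
      simpa using h3.clm_apply (hasDerivAt_const s w)
    have hz : fderiv ℝ f c w = 0 := by
      have hw' : w = (x - m₁) • ev 0 + (y - m₂) • ev 1 := by simp [ev, hw]
      rw [hw', map_add, map_smul, map_smul, ← pd_eq 0 f hd, ← pd_eq 1 f hd, hx, hy]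
      simp
    have mono1 : StrictMonoOn (fun s : ℝ => fderiv ℝ f (c + s • w) w) (Set.Icc 0 1) := by
      apply strictMonoOn_of_deriv_pos (convex_Icc 0 1)
      · exact fun s _ => (hh2 s).continuousAt.continuousWithinAt
      · intro s hs
        have hs' := interior_subset hs
        rw [(hh2 s).deriv, hw, quad_eq f hf]
        exact quad_pos _ _ _ _ _ (hA _ (hmem s hs')) (hD _ (hmem s hs')) hab
    have mono2 : StrictMonoOn (fun s : ℝ => f (c + s • w)) (Set.Icc 0 1) := by
      apply strictMonoOn_of_deriv_pos (convex_Icc 0 1)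
      · exact fun s _ => (hh1 s).continuousAt.continuousWithinAt
      · intro s hs
        have hs' := interior_subset hs
        rw [interior_Icc] at hs
        rw [(hh1 s).deriv]
        have := mono1 (Set.left_mem_Icc.2 zero_le_one) hs' hs.1
        simpa [hz] using this
    have := mono2 (Set.left_mem_Icc.2 zero_le_one) (Set.right_mem_Icc.2 zero_le_one) zero_lt_one
    have e : c + w = (x, y, 1) := by simp [hc, hw]
    simpa [h0, e] using this
  have s1' : 0 ≤ f (x, y, 1) := by
    by_cases hab : x - m₁ = 0 ∧ y - m₂ = 0
    · obtain ⟨ha, hb⟩ := hab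
      rw [sub_eq_zero.1 ha, sub_eq_zero.1 hb, h0]
    · exact (s1 hab).le
  rcases ht1.lt_or_eq with hlt | heq
  · have hmem : ∀ s ∈ Set.Icc t 1, (x, y, s) ∈ U := by
      intro s hs
      have h1t : 0 < 1 - t := by linarith
      have := hU.add_smul_sub_mem hp hp1 (t := (s - t) / (1 - t))
        ⟨div_nonneg (by linarith [hs.1]) h1t.le, (div_le_one h1t).2 (by linarith [hs.2])⟩
      have e : ((x, y, t) : ℝ × ℝ × ℝ) + ((s - t) / (1 - t)) • ((x, y, 1) - (x, y, t))
          = (x, y, s) := by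
        simp [div_mul_cancel₀ _ h1t.ne']
      rwa [e] at this
    have hc : Differentiable ℝ (fun s : ℝ => f (x, y, s)) :=
      hd.comp (by fun_prop)
    have anti : StrictAntiOn (fun s : ℝ => f (x, y, s)) (Set.Icc t 1) := by
      apply strictAntiOn_of_deriv_neg (convex_Icc t 1) hc.continuous.continuousOn
      intro s hs
      have := ht _ (hmem s (interior_subset hs))
      simpa [pd] using this
    have := anti (Set.left_mem_Icc.2 ht1) (Set.right_mem_Icc.2 ht1) hlt
    simp only at this
    linarith
  · subst heq
    apply s1
    rintro ⟨ha, hb⟩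
    exact hne (by rw [sub_eq_zero.1 ha, sub_eq_zero.1 hb])

lemma D0_convex (A₀ M : ℝ) : Convex ℝ (D0 A₀ M) := by
  have : D0 A₀ M = Set.Icc (-A₀) M ×ˢ (Set.univ ×ˢ Set.Icc 0 1) := by
    ext p; simp [D0]
  rw [this]
  exact (convex_Icc _ _).prod (convex_univ.prod (convex_Icc _ _))

lemma pd0_per (φ : ℝ × ℝ × ℝ → ℝ) (h : PerY φ) : PerY (pd 0 φ) := by
  intro x y t
  have e : ∀ s, φ (s, y + 2 * Real.pi, t) = φ (s, y, t) := fun s => h s y t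
  simp [pd, e]

lemma per_int (f : ℝ × ℝ × ℝ → ℝ) (h : PerY f) (x y t : ℝ) (k : ℤ) :
    f (x, y + 2 * Real.pi * k, t) = f (x, y, t) := by
  have hp : Function.Periodic (fun s => f (x, s, t)) (2 * Real.pi) := fun s => h x s t
  have := hp.int_mul k y
  simpa [mul_comm] using this

lemma open_cond (φ0 : ℝ × ℝ × ℝ → ℝ) (hφ0 : ContDiff ℝ 4 φ0) (c : ℝ × ℝ × ℝ)
    (ht : pd 2 (pd 0 φ0) c < 0) (hA : 0 < pd 0 (pd 0 (pd 0 φ0)) c)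
    (hD : 0 < pd 0 (pd 0 (pd 0 φ0)) c * pd 1 (pd 1 (pd 0 φ0)) c -
        (pd 1 (pd 0 (pd 0 φ0)) c) ^ 2) :
    ∃ ε > 0, ∀ p ∈ Metric.ball c ε, ∀ T A B C : ℝ,
      |T - pd 2 (pd 0 φ0) p| < ε → |A - pd 0 (pd 0 (pd 0 φ0)) p| < ε →
      |B - pd 1 (pd 0 (pd 0 φ0)) p| < ε → |C - pd 1 (pd 1 (pd 0 φ0)) p| < ε →
      T < 0 ∧ 0 < A ∧ 0 < A * C - B ^ 2 := by
  have c1 : ∀ i, ContDiff ℝ 3 (pd i φ0) := fun i => pd_contDiff i φ0 3 hφ0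
  have c2 : ∀ j i, ContDiff ℝ 2 (pd j (pd i φ0)) := fun j i => pd_contDiff j _ 2 (c1 i)
  have c3 : ∀ k j i, ContDiff ℝ 1 (pd k (pd j (pd i φ0))) := fun k j i =>
    pd_contDiff k _ 1 (by exact_mod_cast c2 j i)
  have k1 := (c2 2 0).continuous
  have k2 := (c3 0 0 0).continuous
  have k3 := (c3 1 0 0).continuous
  have k4 := (c3 1 1 0).continuous
  let z : (ℝ × ℝ × ℝ) × ℝ × ℝ × ℝ × ℝ := (c, 0, 0, 0, 0)
  have e1 : ∀ᶠ q : (ℝ × ℝ × ℝ) × ℝ × ℝ × ℝ × ℝ in nhds z,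
      pd 2 (pd 0 φ0) q.1 + q.2.1 < 0 :=
    (Continuous.continuousAt (by fun_prop)).eventually_lt continuousAt_const (by simpa [z] using ht)
  have e2 : ∀ᶠ q : (ℝ × ℝ × ℝ) × ℝ × ℝ × ℝ × ℝ in nhds z,
      0 < pd 0 (pd 0 (pd 0 φ0)) q.1 + q.2.2.1 :=
    continuousAt_const.eventually_lt (Continuous.continuousAt (by fun_prop)) (by simpa [z] using hA)
  have e3 : ∀ᶠ q : (ℝ × ℝ × ℝ) × ℝ × ℝ × ℝ × ℝ in nhds z,
      0 < (pd 0 (pd 0 (pd 0 φ0)) q.1 + q.2.2.1) * (pd 1 (pd 1 (pd 0 φ0)) q.1 + q.2.2.2.2)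
        - (pd 1 (pd 0 (pd 0 φ0)) q.1 + q.2.2.2.1) ^ 2 :=
    continuousAt_const.eventually_lt (Continuous.continuousAt (by fun_prop)) (by simpa [z] using hD)
  obtain ⟨ε, hε, h⟩ := Metric.eventually_nhds_iff.1 (e1.and (e2.and e3))
  refine ⟨ε, hε, fun p hp T A B C hT hA hB hC => ?_⟩
  have := @h (p, T - pd 2 (pd 0 φ0) p, A - pd 0 (pd 0 (pd 0 φ0)) p,
    B - pd 1 (pd 0 (pd 0 φ0)) p, C - pd 1 (pd 1 (pd 0 φ0)) p) (by
      simp only [z, Prod.dist_eq, Real.dist_eq, sub_zero, max_lt_iff]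
      simp only [Metric.mem_ball, Prod.dist_eq, Real.dist_eq, max_lt_iff] at hp
      exact ⟨hp, hT, hA, hB, hC⟩)
  simpa using this

/-- **Fundamental Lemma III.3.2 i)**: if `φ` is `C⁴`-close to `φ⁰` and at some `m̃` close to
`m̃₀` one has `∂_xφ(m̃,1) = 0` and `∇_{x,y}(∂_xφ)(m̃,1) = 0`, then `φ` satisfies condition (H)
at `(m̃, 1)`. -/
theorem fundamental_lemma_i (A₀ M : ℝ) (hAM : -A₀ < M)
    (φ0 : ℝ × ℝ × ℝ → ℝ) (m01 m02 : ℝ)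
    (hφ0 : ContDiff ℝ (⊤ : ℕ∞) φ0) (hφ0per : PerY φ0) (hφ0H : CondH A₀ M φ0 m01 m02) :
    ∃ η : ℝ, 0 < η ∧
      ∀ φ : ℝ × ℝ × ℝ → ℝ, ContDiff ℝ 4 φ → PerY φ → C4Close A₀ M φ φ0 η →
        ∀ m₁ m₂ : ℝ, |m₁ - m01| ≤ η → |m₂ - m02| ≤ η →
          pd 0 φ (m₁, m₂, 1) = 0 →
          pd 0 (pd 0 φ) (m₁, m₂, 1) = 0 →
          pd 1 (pd 0 φ) (m₁, m₂, 1) = 0 →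
          CondH A₀ M φ m₁ m₂ := by
  obtain ⟨hm0, hnn, hz, hT, hX, hY, hA, hD⟩ := hφ0H
  have h04 : ContDiff ℝ 4 φ0 := contDiff_infty.1 hφ0 4
  obtain ⟨ε, hε, hopen⟩ := open_cond φ0 h04 (m01, m02, 1) hT hA hD
  have hcont : Continuous (pd 0 φ0) := (pd_contDiff 0 φ0 3 h04).continuous
  have hK : IsCompact ((Set.Icc (-A₀) M ×ˢ (Set.Icc (m02 - Real.pi) (m02 + Real.pi) ×ˢ
      Set.Icc (0:ℝ) 1)) \ Metric.ball ((m01, m02, 1) : ℝ × ℝ × ℝ) ε) :=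
    (isCompact_Icc.prod (isCompact_Icc.prod isCompact_Icc)).diff Metric.isOpen_ball
  have hKpos : ∀ p ∈ ((Set.Icc (-A₀) M ×ˢ (Set.Icc (m02 - Real.pi) (m02 + Real.pi) ×ˢ
      Set.Icc (0:ℝ) 1)) \ Metric.ball ((m01, m02, 1) : ℝ × ℝ × ℝ) ε), 0 < pd 0 φ0 p := by
    rintro ⟨x, y, t⟩ ⟨⟨hx, hy, ht⟩, hb⟩
    have hpD : (x, y, t) ∈ D0 A₀ M := ⟨hx, ht⟩
    refine lt_of_le_of_ne (hnn _ hpD) (fun h => hb ?_)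
    obtain ⟨k, hk⟩ := (hz _ hpD).1 h.symm
    simp only [Prod.mk.injEq] at hk
    obtain ⟨rfl, hk, rfl⟩ := hk
    simp only at hy
    have hpi := Real.pi_pos
    have k0 : k = 0 := by
      have h1 : (k : ℝ) < 1 := by
        by_contra hc
        push Not at hc
        nlinarith [hy.2]
      have h2 : (-1 : ℝ) < k := by
        by_contra hc
        push Not at hc
        nlinarith [hy.1]
      have h1' : k < 1 := by exact_mod_cast h1
      have h2' : -1 < k := by exact_mod_cast h2
      omega
    subst k0
    simp [hk, hε]
  obtain ⟨δ, hδ, hKδ⟩ := hK.exists_forall_le' hcont.continuousOn hKpos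
  have hl : 0 < m01 - (-A₀) := by linarith [hm0.1]
  have hr : 0 < M - m01 := by linarith [hm0.2]
  obtain ⟨η, hη, hη'⟩ : ∃ η : ℝ, 0 < η ∧ η < ε ∧ η < δ ∧ η < m01 - (-A₀) ∧ η < M - m01 := by
    obtain ⟨η, h1, h2⟩ := exists_between (lt_min hε (lt_min hδ (lt_min hl hr)))
    simp only [lt_min_iff] at h2
    exact ⟨η, h1, h2⟩
  obtain ⟨hηε, hηδ, hηl, hηr⟩ := hη'
  refine ⟨η, hη, fun φ hφ hper hclose m₁ m₂ hm1 hm2 hf0 hfx hfy => ?_⟩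
  have hm1' := abs_le.1 hm1
  have hm : m₁ ∈ Set.Ioo (-A₀) M := ⟨by linarith [hm1'.1], by linarith [hm1'.2]⟩
  have hmD : (m₁, m₂, 1) ∈ D0 A₀ M := ⟨⟨hm.1.le, hm.2.le⟩, by simp⟩
  have hmB : (m₁, m₂, 1) ∈ Metric.ball ((m01, m02, 1) : ℝ × ℝ × ℝ) ε := by
    simp only [Metric.mem_ball, Prod.dist_eq, Real.dist_eq, max_lt_iff]
    exact ⟨by linarith, by linarith, by simpa using hε⟩
  have hcond : ∀ p ∈ D0 A₀ M ∩ Metric.ball ((m01, m02, 1) : ℝ × ℝ × ℝ) ε,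
      pd 2 (pd 0 φ) p < 0 ∧ 0 < pd 0 (pd 0 (pd 0 φ)) p ∧
      0 < pd 0 (pd 0 (pd 0 φ)) p * pd 1 (pd 1 (pd 0 φ)) p - (pd 1 (pd 0 (pd 0 φ)) p) ^ 2 :=
    fun p hp => hopen p hp.2 _ _ _ _
      ((close2 A₀ M η φ φ0 hφ h04 hclose _ _ p hp.1).trans_lt hηε)
      ((close3 A₀ M η φ φ0 hφ h04 hclose _ _ _ p hp.1).trans_lt hηε)
      ((close3 A₀ M η φ φ0 hφ h04 hclose _ _ _ p hp.1).trans_lt hηε)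
      ((close3 A₀ M η φ φ0 hφ h04 hclose _ _ _ p hp.1).trans_lt hηε)
  have hf2 : ContDiff ℝ 2 (pd 0 φ) := (pd_contDiff 0 φ 3 hφ).of_le (by norm_cast)
  have hperf := pd0_per φ hper
  have hfund : ∀ x y t : ℝ, (x, y, t) ∈ D0 A₀ M → y ∈ Set.Icc (m02 - Real.pi) (m02 + Real.pi) →
      (x, y, t) ≠ (m₁, m₂, 1) → 0 < pd 0 φ (x, y, t) := by
    intro x y t hp hy hne
    by_cases hb : (x, y, t) ∈ Metric.ball ((m01, m02, 1) : ℝ × ℝ × ℝ) ε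
    · refine local_pos (pd 0 φ) hf2 _ ((D0_convex A₀ M).inter (convex_ball _ ε)) m₁ m₂
        ⟨hmD, hmB⟩ hf0 hfx hfy (fun p hp => (hcond p hp).2.1) (fun p hp => (hcond p hp).2.2)
        (fun p hp => (hcond p hp).1) x y t ⟨hp, hb⟩ ⟨⟨hp.1, by simp⟩, ?_⟩ hp.2.2 hne
      simp only [Metric.mem_ball, Prod.dist_eq, Real.dist_eq, max_lt_iff] at hb ⊢
      exact ⟨hb.1, hb.2.1, by simpa using hε⟩
    · have h1 := hKδ (x, y, t) ⟨⟨hp.1, hy, hp.2⟩, hb⟩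
      have h2 := abs_le.1 (close1 A₀ M η φ φ0 hφ h04 hclose 0 _ hp)
      linarith [h2.1]
  have hglob : ∀ x y t : ℝ, (x, y, t) ∈ D0 A₀ M →
      (∃ k : ℤ, (x, y, t) = (m₁, m₂ + 2 * Real.pi * k, 1)) ∨ 0 < pd 0 φ (x, y, t) := by
    intro x y t hp
    obtain ⟨k, hk, -⟩ := existsUnique_add_zsmul_mem_Ico Real.two_pi_pos y (m02 - Real.pi)
    simp only [zsmul_eq_mul] at hk
    have hk' : y + 2 * Real.pi * k ∈ Set.Icc (m02 - Real.pi) (m02 + Real.pi) :=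
      ⟨by linarith [hk.1], by linarith [hk.2]⟩
    by_cases hne : ((x, y + 2 * Real.pi * k, t) : ℝ × ℝ × ℝ) = (m₁, m₂, 1)
    · left
      refine ⟨-k, ?_⟩
      simp only [Prod.mk.injEq] at hne ⊢
      refine ⟨hne.1, ?_, hne.2.2⟩
      push_cast
      linarith [hne.2.1]
    · right
      rw [← per_int _ hperf x y t k]
      exact hfund _ _ _ ⟨hp.1, hp.2⟩ hk' hne
  have hzero : ∀ k : ℤ, pd 0 φ (m₁, m₂ + 2 * Real.pi * k, 1) = 0 := fun k => by
    rw [per_int _ hperf, hf0]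
  have hcm := hcond _ ⟨hmD, hmB⟩
  refine ⟨hm, ?_, ?_, hcm.1, hfx, hfy, hcm.2.1, hcm.2.2⟩
  · rintro ⟨x, y, t⟩ hp
    rcases hglob x y t hp with ⟨k, hk⟩ | h
    · rw [hk, hzero]
    · exact h.le
  · rintro ⟨x, y, t⟩ hp
    constructor
    · intro h
      rcases hglob x y t hp with hk | h'
      · exact hk
      · exact absurd h h'.ne'
    · rintro ⟨k, hk⟩
      rw [hk, hzero]

end
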